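/- Let D be the derivation of ℚ[u,v,w] with D(u)=uvw, D(v)=2uw, D(w)=uw. For every n ≥ 1, D^n(w) = Σ_{i=1}^{n} Σ_{j=0}^{n−1} γ_{n,i,j} · u^i v^j w^{2n+1−2i−j}, an identity in ℚ[u,v,w], where γ_{n,i,j} is the number of σ ∈ Q_n with lap(σ) = i, dasc(σ) = j and dp(σ) = 0. -/

import Mathlib

open Finset MvPolynomial

/-- Stirling permutations of order `n`, encoded as functions `Fin (2*n) → Fin (n+1)`
in one-line notation (position `i` holds the letter `σ (i) ∈ {1,…,n}`), such that each
letter `1,…,n` occurs exactly twice and all entries between the two occurrences of a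
letter are larger than that letter. -/
def StirlingSet (n : ℕ) : Finset (Fin (2*n) → Fin (n+1)) :=
  Finset.univ.filter (fun σ =>
    (∀ v : Fin (n+1), (v : ℕ) ≠ 0 →
        (Finset.univ.filter (fun i => σ i = v)).card = 2) ∧
    (∀ i j k : Fin (2*n), i < j → j < k → σ i = σ k → σ i < σ j))

/-- The letter at position `i ∈ {1,…,2n}` of a Stirling permutation, with the
convention that positions outside this range (in particular position `0`) hold `0`. -/
def sval {n : ℕ} (σ : Fin (2*n) → Fin (n+1)) (i : ℕ) : ℕ :=
  if h : 1 ≤ i ∧ i ≤ 2*n then (σ ⟨i - 1, by omega⟩ : ℕ) else 0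

/-- The number of ascent-plateaus: indices `2 ≤ i ≤ 2n-1` with `σ_{i-1} < σ_i = σ_{i+1}`. -/
def apQ {n : ℕ} (σ : Fin (2*n) → Fin (n+1)) : ℕ :=
  ((Finset.Icc 2 (2*n - 1)).filter
    (fun i => sval σ (i-1) < sval σ i ∧ sval σ i = sval σ (i+1))).card

/-- The number of left ascent-plateaus: indices `1 ≤ i ≤ 2n-1` with
`σ_{i-1} < σ_i = σ_{i+1}`, where `σ_0 = 0`. -/
def lapQ {n : ℕ} (σ : Fin (2*n) → Fin (n+1)) : ℕ :=
  ((Finset.Icc 1 (2*n - 1)).filter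
    (fun i => sval σ (i-1) < sval σ i ∧ sval σ i = sval σ (i+1))).card

/-- The number of double ascents: indices `1 ≤ i ≤ 2n-1` with
`σ_{i-1} < σ_i < σ_{i+1}`, where `σ_0 = 0`. -/
def dascQ {n : ℕ} (σ : Fin (2*n) → Fin (n+1)) : ℕ :=
  ((Finset.Icc 1 (2*n - 1)).filter
    (fun i => sval σ (i-1) < sval σ i ∧ sval σ i < sval σ (i+1))).card

/-- The number of descent-plateaus: indices `2 ≤ i ≤ 2n-1` with
`σ_{i-1} > σ_i = σ_{i+1}`. -/
def dpQ {n : ℕ} (σ : Fin (2*n) → Fin (n+1)) : ℕ :=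
  ((Finset.Icc 2 (2*n - 1)).filter
    (fun i => sval σ i < sval σ (i-1) ∧ sval σ i = sval σ (i+1))).card

/-- The number of ascents: indices `1 ≤ i ≤ 2n-1` with `σ_i < σ_{i+1}` or `i = 1`. -/
def ascQ {n : ℕ} (σ : Fin (2*n) → Fin (n+1)) : ℕ :=
  ((Finset.Icc 1 (2*n - 1)).filter
    (fun i => sval σ i < sval σ (i+1) ∨ i = 1)).card

/-- The number of plateaus: indices `1 ≤ i ≤ 2n-1` with `σ_i = σ_{i+1}`. -/
def platQ {n : ℕ} (σ : Fin (2*n) → Fin (n+1)) : ℕ :=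
  ((Finset.Icc 1 (2*n - 1)).filter (fun i => sval σ i = sval σ (i+1))).card

/-- The flag ascent-plateau number: `2·ap(σ)+1` if `σ_1 = σ_2`, and `2·ap(σ)` otherwise. -/
def fapQ {n : ℕ} (σ : Fin (2*n) → Fin (n+1)) : ℕ :=
  if 1 ≤ n ∧ sval σ 1 = sval σ 2 then 2 * apQ σ + 1 else 2 * apQ σ

/-- `γ_{n,i,j}`: the number of Stirling permutations of order `n` with `lap = i`,
`dasc = j` and `dp = 0`. -/
def gammaNum (n i j : ℕ) : ℕ :=
  ((StirlingSet n).filter (fun σ => lapQ σ = i ∧ dascQ σ = j ∧ dpQ σ = 0)).card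

/-!
Build the words of `Q_{n+1}` from those of `Q_n` by inserting two adjacent letters `n + 1` into one
of the `2 * n + 1` slots, and weigh a word by `u ^ lap * v ^ dasc * z ^ dp * w ^ (des + 1)`.
Inserting in every slot acts on the weight as the derivation `G` with `G u = u * w * (v + z)` and
`G v = G z = G w = u * w`, so the total weight of `Q_n` is `G^[n] w`. On the other hand, extend `D`
to polynomials in `z` by `D z = u * w`: since `D v = 2 * (u * w)`, the elements `u`, `v - z`, `z`,
`w` satisfy the rules of `G`. Hence the weight sum with `v - z` in place of `v` equals `D^[n] w`,
which does not involve `z`, and setting `z = 0` leaves the words without descent-plateaus. For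
these, `2 * lap + dasc + des = 2 * n` determines the exponent of `w`.
-/

section Weights
variable {A : Type*} [CommSemiring A]

/-- The factor contributed by a letter `b` standing between `a` and `c`: `u` for an ascent-plateau,
`v` for a double ascent, `z` for a descent-plateau, and a further `w` whenever `a > b`. -/
def letterWeight (u v z w : A) (a b c : ℕ) : A :=
  (if a < b ∧ b = c then u else 1) * (if a < b ∧ b < c then v else 1) *
    (if b < a ∧ b = c then z else 1) * (if b < a then w else 1)

/-- The product of the weights of the letters of a word which is preceded by the given letter and
followed by `0`; the closing descent to `0` contributes the weight `w` of the empty word. -/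
def wordWeight (u v z w : A) : ℕ → List ℕ → A
  | _, [] => w
  | p, b :: l => letterWeight u v z w p b (l.headD 0) * wordWeight u v z w b l

/-- The word obtained from `l` by inserting two adjacent letters `m` after its first `k` letters. -/
def insertPair (m k : ℕ) (l : List ℕ) : List ℕ :=
  l.take k ++ m :: m :: l.drop k

/-- The constraints that the Stirling condition imposes on consecutive letters of `l`, when `l` is
preceded by `p` and followed by `0`: an ascent is followed by a weak ascent, and no three
consecutive letters agree. -/
def IsLocallyStirling (p : ℕ) (l : List ℕ) : Prop :=
  ∀ a b c, [a, b, c] <:+: p :: (l ++ [0]) → 0 < b ∧ (a < b → b ≤ c) ∧ (a = b → b ≠ c)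

theorem IsLocallyStirling.of_cons {p b : ℕ} {l : List ℕ} (h : IsLocallyStirling p (b :: l)) :
    IsLocallyStirling b l :=
  fun _ _ _ ht => h _ _ _ (List.infix_cons ht)

theorem IsLocallyStirling.head {p b : ℕ} {l : List ℕ} (h : IsLocallyStirling p (b :: l)) :
    0 < b ∧ (p < b → b ≤ l.headD 0) ∧ (p = b → b ≠ l.headD 0) := by
  refine h _ _ _ (List.IsPrefix.isInfix ?_)
  cases l <;> simp

theorem insertPair_zero (m : ℕ) (l : List ℕ) : insertPair m 0 l = m :: m :: l := by
  simp [insertPair]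

theorem insertPair_succ_cons (m k b : ℕ) (l : List ℕ) :
    insertPair m (k + 1) (b :: l) = b :: insertPair m k l := by
  simp [insertPair]

theorem headD_insertPair_succ {k : ℕ} {l : List ℕ} (hk : k < l.length) (m : ℕ) :
    (insertPair m (k + 1) l).headD 0 = l.headD 0 := by
  cases l <;> simp [insertPair] at hk ⊢

variable (u v z w : A) {a b c m : ℕ}

theorem letterWeight_of_lt_of_lt (hab : a < b) (hbc : b < c) : letterWeight u v z w a b c = v := by
  simp [letterWeight, hab, hab.not_gt, hbc, hbc.ne]

theorem letterWeight_of_gt_of_ne (hab : b < a) (hbc : b ≠ c) : letterWeight u v z w a b c = w := by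
  simp [letterWeight, hab, hab.not_gt, hbc]

theorem letterWeight_self_left (b c : ℕ) : letterWeight u v z w b b c = 1 := by
  simp [letterWeight]

theorem letterWeight_self_right_of_lt (hab : a < b) : letterWeight u v z w a b b = u := by
  simp [letterWeight, hab, hab.not_gt]

theorem letterWeight_self_right_of_gt (hab : b < a) : letterWeight u v z w a b b = z * w := by
  simp [letterWeight, hab, hab.not_gt]

theorem letterWeight_eq_of_lt (hbm : b < m) (hbc : b ≠ c) (hasc : a < b → b ≤ c) :
    letterWeight u v z w a b m = letterWeight u v z w a b c := by
  rcases lt_trichotomy a b with h | rfl | h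
  · rw [letterWeight_of_lt_of_lt _ _ _ _ h hbm,
      letterWeight_of_lt_of_lt _ _ _ _ h ((hasc h).lt_of_ne hbc)]
  · rw [letterWeight_self_left, letterWeight_self_left]
  · rw [letterWeight_of_gt_of_ne _ _ _ _ h hbm.ne, letterWeight_of_gt_of_ne _ _ _ _ h hbc]

theorem wordWeight_insertPair_zero {p : ℕ} (hp : p < m) (l : List ℕ) :
    wordWeight u v z w p (insertPair m 0 l) = u * wordWeight u v z w m l := by
  rw [insertPair_zero, wordWeight, wordWeight, List.headD_cons, letterWeight_self_left, one_mul,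
    letterWeight_self_right_of_lt _ _ _ _ hp]

end Weights

section Insertion
variable {A : Type*} [CommRing A]

theorem sum_wordWeight_insertPair_cons (u v z w : A) {p b m : ℕ} (hp : p < m) (hb : b < m)
    (l : List ℕ) :
    ∑ k ∈ range (l.length + 2), wordWeight u v z w p (insertPair m k (b :: l)) =
      u * wordWeight u v z w m (b :: l) +
      letterWeight u v z w p b m * (u * wordWeight u v z w m l) +
      letterWeight u v z w p b (l.headD 0) *
        (∑ k ∈ range (l.length + 1), wordWeight u v z w b (insertPair m k l) -
          u * wordWeight u v z w m l) := by
  have hlater : ∀ k ∈ range l.length,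
      wordWeight u v z w p (insertPair m (k + 1 + 1) (b :: l)) =
        letterWeight u v z w p b (l.headD 0) * wordWeight u v z w b (insertPair m (k + 1) l) := by
    intro k hk
    rw [insertPair_succ_cons, wordWeight, headD_insertPair_succ (mem_range.1 hk)]
  rw [sum_range_succ', sum_range_succ', sum_congr rfl hlater, ← mul_sum,
    sum_range_succ' _ l.length, wordWeight_insertPair_zero _ _ _ _ hp,
    wordWeight_insertPair_zero _ _ _ _ hb, add_sub_cancel_right, insertPair_succ_cons,
    wordWeight, wordWeight_insertPair_zero _ _ _ _ hb, insertPair_zero, List.headD_cons]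
  ring

variable {R : Type*} [CommSemiring R] [Algebra R A] {G : Derivation R A A} {u v z w : A}

theorem derivation_letterWeight_of_ne (hv : G v = u * w) (hw : G w = u * w) {a b c : ℕ}
    (hbc : b ≠ c) (hasc : a < b → b ≤ c) :
    G (letterWeight u v z w a b c) = if a = b then 0 else u * w := by
  rcases lt_trichotomy a b with h | rfl | h
  · rw [letterWeight_of_lt_of_lt _ _ _ _ h ((hasc h).lt_of_ne hbc), hv, if_neg h.ne]
  · rw [letterWeight_self_left, Derivation.map_one_eq_zero, if_pos rfl]
  · rw [letterWeight_of_gt_of_ne _ _ _ _ h hbc, hw, if_neg h.ne']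

theorem derivation_letterWeight_self_right (hu : G u = u * w * (v + z)) (hz : G z = u * w)
    (hw : G w = u * w) {a b m : ℕ} (hab : a ≠ b) (hbm : b < m) :
    G (letterWeight u v z w a b b) =
      u * letterWeight u v z w m b b + u * w * letterWeight u v z w a b m := by
  rw [letterWeight_self_right_of_gt _ _ _ _ hbm]
  rcases hab.lt_or_gt with h | h
  · rw [letterWeight_self_right_of_lt _ _ _ _ h, letterWeight_of_lt_of_lt _ _ _ _ h hbm, hu]
    ring
  · rw [letterWeight_self_right_of_gt _ _ _ _ h, letterWeight_of_gt_of_ne _ _ _ _ h hbm.ne,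
      Derivation.leibniz, hz, hw, smul_eq_mul, smul_eq_mul]
    ring

/-- If `l` begins with `p`, its first slot lies inside a plateau, and inserting there differentiates
the weight of the letter `p` in front of `l`, whence the correction term. -/
theorem sum_wordWeight_insertPair (hu : G u = u * w * (v + z)) (hv : G v = u * w)
    (hz : G z = u * w) (hw : G w = u * w) {p m : ℕ} {l : List ℕ} (hl : IsLocallyStirling p l)
    (hp : p < m) (hlt : ∀ b ∈ l, b < m) :
    ∑ k ∈ range (l.length + 1), wordWeight u v z w p (insertPair m k l) =
      G (wordWeight u v z w p l) +
        if l.head? = some p then u * w * wordWeight u v z w p l else 0 := by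
  induction l generalizing p with
  | nil => simp [wordWeight_insertPair_zero _ _ _ _ hp, wordWeight, hw]
  | cons b l ih =>
    obtain ⟨hb₀, hasc, hconst⟩ := hl.head
    have hb : b < m := hlt b List.mem_cons_self
    rw [List.length_cons, sum_wordWeight_insertPair_cons u v z w hp hb,
      ih hl.of_cons hb fun a ha => hlt a (List.mem_cons_of_mem b ha)]
    simp only [List.head?_cons, Option.some.injEq, wordWeight, Derivation.leibniz, smul_eq_mul]
    by_cases hhead : l.head? = some b
    · obtain ⟨l, rfl⟩ := List.head?_eq_some_iff.1 hhead
      have hpb : p ≠ b := fun h => hconst h rfl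
      have htop : wordWeight u v z w m (b :: l) = w * wordWeight u v z w b (b :: l) := by
        simp only [wordWeight, letterWeight_self_left, one_mul]
        rw [letterWeight_of_gt_of_ne _ _ _ _ hb (hl.of_cons.head.2.2 rfl)]
      rw [htop, if_pos hhead, if_neg hpb.symm, List.headD_cons,
        derivation_letterWeight_self_right hu hz hw hpb hb]
      ring
    · have hbc : b ≠ l.headD 0 := by
        cases l <;> simp_all [hb₀.ne', eq_comm]
      rw [if_neg hhead, letterWeight_of_gt_of_ne _ _ _ _ hb hbc,
        letterWeight_eq_of_lt _ _ _ _ hb hbc hasc, derivation_letterWeight_of_ne hv hw hbc hasc]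
      rcases eq_or_ne p b with rfl | hpb
      · simp only [if_true, letterWeight_self_left]
        ring
      · rw [if_neg hpb, if_neg hpb.symm]
        ring

end Insertion

section Extension
variable {R A : Type*} [CommRing R] [CommRing A] [Algebra R A]

/-- The derivation of `A[z]` extending `D` with `z ↦ a`. -/
noncomputable def polynomialExtension (D : Derivation R A A) (a : A) :
    Derivation R (Polynomial A) (Polynomial A) :=
  PolynomialModule.equivPolynomialSelf.toLinearMap.compDer D.mapCoeffs +
    (Polynomial.mkDerivation A (Polynomial.C a)).restrictScalars R

theorem polynomialExtension_C (D : Derivation R A A) (a b : A) :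
    polynomialExtension D a (Polynomial.C b) = Polynomial.C (D b) := by
  simp [polynomialExtension]

theorem polynomialExtension_X (D : Derivation R A A) (a : A) :
    polynomialExtension D a Polynomial.X = Polynomial.C a := by
  simp [polynomialExtension]

theorem iterate_polynomialExtension_C (D : Derivation R A A) (a b : A) (n : ℕ) :
    (polynomialExtension D a)^[n] (Polynomial.C b) = Polynomial.C (D^[n] b) :=
  (Function.Semiconj.iterate_right (fun b => (polynomialExtension_C D a b).symm) n b).symm

end Extension

section Positions
variable {n i j k : ℕ} {σ : Fin (2 * n) → Fin (n + 1)}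

theorem exists_sval_eq_of_mem (hi : i ∈ Icc 1 (2 * n)) (σ : Fin (2 * n) → Fin (n + 1)) :
    ∃ x : Fin (2 * n), (x : ℕ) + 1 = i ∧ sval σ i = σ x := by
  rw [mem_Icc] at hi
  exact ⟨⟨i - 1, by omega⟩, Nat.sub_add_cancel hi.1, dif_pos hi⟩

theorem sval_fin_succ (σ : Fin (2 * n) → Fin (n + 1)) (x : Fin (2 * n)) :
    sval σ (x + 1) = σ x := by
  simp [sval]

theorem sval_zero (σ : Fin (2 * n) → Fin (n + 1)) : sval σ 0 = 0 := by
  simp [sval]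

theorem sval_two_mul_add_one (σ : Fin (2 * n) → Fin (n + 1)) : sval σ (2 * n + 1) = 0 := by
  simp [sval]

theorem ne_zero_of_mem_StirlingSet (hσ : σ ∈ StirlingSet n) (x : Fin (2 * n)) : σ x ≠ 0 := by
  have hcard := (mem_filter.1 hσ).2.1
  have htotal := card_eq_sum_card_fiberwise (f := σ) (s := univ) (t := univ)
    fun _ _ => mem_coe.2 (mem_univ _)
  rw [Fin.sum_univ_succ, sum_congr rfl fun v _ => hcard (Fin.succ v) (by simp)] at htotal
  simp only [card_univ, Fintype.card_fin, sum_const, smul_eq_mul] at htotal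
  have hzero : (univ.filter fun x => σ x = 0).card = 0 := by omega
  exact filter_eq_empty_iff.1 (card_eq_zero.1 hzero) (mem_univ x)

theorem sval_pos (hσ : σ ∈ StirlingSet n) (hi : i ∈ Icc 1 (2 * n)) : 0 < sval σ i := by
  obtain ⟨x, rfl, -⟩ := exists_sval_eq_of_mem hi σ
  rw [sval_fin_succ]
  exact Fin.pos_iff_ne_zero.2 (ne_zero_of_mem_StirlingSet hσ x)

theorem sval_le (σ : Fin (2 * n) → Fin (n + 1)) (i : ℕ) : sval σ i ≤ n := by
  rw [sval]
  split_ifs <;> omega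

theorem exists_ne_sval_eq (hσ : σ ∈ StirlingSet n) (hi : i ∈ Icc 1 (2 * n)) :
    ∃ j ∈ Icc 1 (2 * n), j ≠ i ∧ sval σ j = sval σ i := by
  obtain ⟨x, rfl, -⟩ := exists_sval_eq_of_mem hi σ
  have hcard := (mem_filter.1 hσ).2.1 (σ x)
    (Fin.val_ne_zero_iff.2 (ne_zero_of_mem_StirlingSet hσ x))
  obtain ⟨y, hy, hyx⟩ := exists_mem_ne (hcard ▸ one_lt_two) x
  refine ⟨y + 1, by simp, by simpa [Fin.val_inj] using hyx, ?_⟩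
  rw [sval_fin_succ, sval_fin_succ, (mem_filter.1 hy).2]

theorem sval_lt_of_between (hσ : σ ∈ StirlingSet n) (hi : 1 ≤ i) (hij : i < j) (hjk : j < k)
    (hk : k ≤ 2 * n) (hik : sval σ i = sval σ k) : sval σ i < sval σ j := by
  obtain ⟨x, rfl, hx⟩ := exists_sval_eq_of_mem (mem_Icc.2 ⟨hi, by omega⟩) σ
  obtain ⟨y, rfl, hy⟩ := exists_sval_eq_of_mem (i := j) (mem_Icc.2 ⟨by omega, by omega⟩) σ
  obtain ⟨t, rfl, ht⟩ := exists_sval_eq_of_mem (i := k) (mem_Icc.2 ⟨by omega, hk⟩) σ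
  rw [hx, ht] at hik
  rw [hx, hy]
  exact (mem_filter.1 hσ).2.2 x y t (by omega) (by omega) (Fin.ext hik)

theorem sval_le_sval_succ_of_ascent (hσ : σ ∈ StirlingSet n) (hi : i ∈ Icc 1 (2 * n))
    (h : sval σ (i - 1) < sval σ i) : sval σ i ≤ sval σ (i + 1) := by
  obtain ⟨j, hj, hji, heq⟩ := exists_ne_sval_eq hσ hi
  rw [mem_Icc] at hi hj
  rcases hji.lt_or_gt with hlt | hgt
  · rcases (Nat.le_sub_one_of_lt hlt).eq_or_lt with rfl | hlt'
    · exact absurd heq h.ne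
    · have := sval_lt_of_between hσ hj.1 hlt' (by omega) hi.2 heq
      omega
  · rcases (Nat.succ_le_of_lt hgt).eq_or_lt with rfl | hgt'
    · exact heq.ge
    · exact (sval_lt_of_between hσ hi.1 (Nat.lt_succ_self i) hgt' hj.2 heq.symm).le

theorem sval_ne_sval_succ_of_plateau (hσ : σ ∈ StirlingSet n) (hi : i ∈ Icc 1 (2 * n))
    (h : sval σ (i - 1) = sval σ i) : sval σ i ≠ sval σ (i + 1) := by
  intro h'
  have hpos := sval_pos hσ hi
  have hi₁ : i - 1 ≠ 0 := fun h₀ => by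
    rw [h₀, sval_zero] at h
    omega
  have hi₂ : i ≠ 2 * n := fun h₀ => by
    rw [h₀, sval_two_mul_add_one, ← h₀] at h'
    omega
  rw [mem_Icc] at hi
  have := sval_lt_of_between hσ (Nat.pos_of_ne_zero hi₁) (by omega) (Nat.lt_succ_self i) (by omega)
    (h.trans h')
  omega

/-- The number of descents: indices `1 ≤ i ≤ 2n` with `σ_{i-1} > σ_i`. The descent from `σ_{2n}` to
the final `0` is not counted. -/
def desQ (σ : Fin (2 * n) → Fin (n + 1)) : ℕ :=
  ((Icc 1 (2 * n)).filter fun i => sval σ i < sval σ (i - 1)).card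

theorem lapQ_eq_card (σ : Fin (2 * n) → Fin (n + 1)) : lapQ σ =
    ((Icc 1 (2 * n)).filter
      fun i => sval σ (i - 1) < sval σ i ∧ sval σ i = sval σ (i + 1)).card := by
  rw [lapQ]
  congr 1
  ext i
  have hlast := sval_two_mul_add_one σ
  grind

theorem dascQ_eq_card (σ : Fin (2 * n) → Fin (n + 1)) : dascQ σ =
    ((Icc 1 (2 * n)).filter
      fun i => sval σ (i - 1) < sval σ i ∧ sval σ i < sval σ (i + 1)).card := by
  rw [dascQ]
  congr 1
  ext i
  have hlast := sval_two_mul_add_one σ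
  grind

theorem dpQ_eq_card (hσ : σ ∈ StirlingSet n) : dpQ σ =
    ((Icc 1 (2 * n)).filter
      fun i => sval σ i < sval σ (i - 1) ∧ sval σ i = sval σ (i + 1)).card := by
  rw [dpQ]
  congr 1
  ext i
  have hfirst := sval_zero σ
  have hlast := sval_two_mul_add_one σ
  have hpos : i ∈ Icc 1 (2 * n) → 0 < sval σ i := sval_pos hσ
  grind

theorem card_ascents (hσ : σ ∈ StirlingSet n) :
    ((Icc 1 (2 * n)).filter fun i => sval σ (i - 1) < sval σ i).card = lapQ σ + dascQ σ := by
  rw [lapQ_eq_card, dascQ_eq_card, ← filter_filter, ← filter_filter, ← card_union_of_disjoint,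
    ← filter_or]
  · refine congrArg card (filter_true_of_mem fun i hi => ?_).symm
    rw [mem_filter] at hi
    exact (sval_le_sval_succ_of_ascent hσ hi.1 hi.2).eq_or_lt
  · exact disjoint_filter.2 fun i _ h => h.not_lt

theorem sval_ne_of_ascent (hσ : σ ∈ StirlingSet n) (hi : 1 ≤ i) (hij : i < j) (hj : j ≤ 2 * n)
    (h : sval σ (j - 1) < sval σ j) : sval σ i ≠ sval σ j := by
  intro heq
  rcases (Nat.le_sub_one_of_lt hij).eq_or_lt with rfl | hlt
  · omega
  · have := sval_lt_of_between hσ hi hlt (by omega) hj heq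
    omega

theorem lapQ_add_dascQ_le (hσ : σ ∈ StirlingSet n) : lapQ σ + dascQ σ ≤ n := by
  have hmaps : Set.MapsTo (sval σ)
      ((Icc 1 (2 * n)).filter fun i => sval σ (i - 1) < sval σ i) (Icc 1 n) := fun i hi => by
    have hi' := mem_of_mem_filter i (mem_coe.1 hi)
    exact mem_coe.2 (mem_Icc.2 ⟨sval_pos hσ hi', sval_le σ i⟩)
  have hinj : Set.InjOn (sval σ)
      ((Icc 1 (2 * n)).filter fun i => sval σ (i - 1) < sval σ i) := by
    intro i hi j hj hij
    simp only [coe_filter, mem_Icc, Set.mem_ofPred_eq] at hi hj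
    by_contra hne
    rcases Nat.lt_or_gt_of_ne hne with hlt | hlt
    · exact sval_ne_of_ascent hσ hi.1.1 hlt hj.1.2 hj.2 hij
    · exact sval_ne_of_ascent hσ hj.1.1 hlt hi.1.2 hi.2 hij.symm
  simpa [card_ascents hσ] using card_le_card_of_injOn _ hmaps hinj

theorem card_plateaus (hσ : σ ∈ StirlingSet n) :
    ((Icc 1 (2 * n)).filter fun i => sval σ (i - 1) = sval σ i).card = lapQ σ + dpQ σ := by
  rw [lapQ_eq_card, dpQ_eq_card hσ, ← card_union_of_disjoint, ← filter_or]
  · have hfirst := sval_zero σ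
    have hlast := sval_two_mul_add_one σ
    refine card_nbij' (fun i => i - 1) (fun i => i + 1) (fun i hi => ?_) (fun i hi => ?_)
      (fun i hi => ?_) (fun i _ => ?_)
    · have hpos : i ∈ Icc 1 (2 * n) → 0 < sval σ i := sval_pos hσ
      have := sval_ne_sval_succ_of_plateau (i := i - 1) hσ
      grind
    · have hpos : i ∈ Icc 1 (2 * n) → 0 < sval σ i := sval_pos hσ
      grind
    · grind
    · grind
  · exact disjoint_filter.2 fun i _ h h' => h.1.asymm h'.1

theorem two_mul_lapQ_add_dascQ_add_dpQ_add_desQ (hσ : σ ∈ StirlingSet n) :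
    2 * lapQ σ + dascQ σ + dpQ σ + desQ σ = 2 * n := by
  have htrichotomy := card_filter_add_card_filter_not (s := Icc 1 (2 * n))
    fun i => sval σ i < sval σ (i - 1)
  simp only [not_lt, le_iff_lt_or_eq] at htrichotomy
  rw [filter_or, card_union_of_disjoint (disjoint_filter.2 fun i _ h => h.ne), card_ascents hσ,
    card_plateaus hσ, Nat.card_Icc, ← desQ] at htrichotomy
  omega

theorem lapQ_pos (hσ : σ ∈ StirlingSet n) (hn : 1 ≤ n) : 0 < lapQ σ := by
  have hlast : sval σ (2 * n + 1) ≤ sval σ (2 * n) :=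
    (sval_two_mul_add_one σ).trans_le (Nat.zero_le _)
  have hexists : ∃ i, sval σ (i + 1) ≤ sval σ i := ⟨2 * n, hlast⟩
  obtain ⟨i, hi, hmin⟩ : ∃ i, sval σ (i + 1) ≤ sval σ i ∧ ∀ j < i, sval σ j < sval σ (j + 1) :=
    ⟨Nat.find hexists, Nat.find_spec hexists, fun j hj => not_le.1 (Nat.find_min hexists hj)⟩
  have hi_le : i ≤ 2 * n := not_lt.1 fun h => (hmin _ h).not_ge hlast
  have hi_pos : 1 ≤ i := by
    by_contra! h
    have hone := sval_pos (i := 1) hσ (mem_Icc.2 ⟨le_rfl, by omega⟩)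
    have hzero := sval_zero σ
    grind
  have hmem : i ∈ Icc 1 (2 * n) := mem_Icc.2 ⟨hi_pos, hi_le⟩
  have hasc : sval σ (i - 1) < sval σ i := by
    simpa [Nat.sub_add_cancel hi_pos] using hmin (i - 1) (by omega)
  rw [lapQ_eq_card, card_pos]
  exact ⟨i, mem_filter.2 ⟨hmem, hasc, (sval_le_sval_succ_of_ascent hσ hmem hasc).antisymm hi⟩⟩

end Positions

section ListLemmas
variable {α : Type*}

theorem count_ofFn [DecidableEq α] {N : ℕ} (f : Fin N → α) (a : α) :
    (List.ofFn f).count a = (univ.filter fun i => f i = a).card := by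
  rw [List.ofFn_eq_map, List.count, List.countP_map, List.countP_eq_length_filter,
    ← List.toFinset_card_of_nodup ((List.nodup_finRange N).filter _)]
  congr 1
  ext i
  simp

theorem sublist_finRange_iff {N : ℕ} {l : List (Fin N)} :
    l.Sublist (List.finRange N) ↔ l.Pairwise (· < ·) := by
  refine ⟨fun h => (List.pairwise_lt_finRange N).sublist h, fun h => ?_⟩
  exact List.sublist_of_subperm_of_pairwise
    (List.subperm_of_subset (h.imp ne_of_lt) fun x _ => List.mem_finRange x) h
    (List.pairwise_lt_finRange N)

theorem triple_sublist_ofFn_iff {N : ℕ} {f : Fin N → α} {a b c : α} :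
    [a, b, c].Sublist (List.ofFn f) ↔
      ∃ i j k : Fin N, i < j ∧ j < k ∧ f i = a ∧ f j = b ∧ f k = c := by
  rw [List.ofFn_eq_map, List.sublist_map_iff]
  constructor
  · rintro ⟨l, hl, heq⟩
    rw [sublist_finRange_iff] at hl
    match l, heq with
    | [i, j, k], heq =>
      simp only [List.map_cons, List.map_nil, List.cons.injEq, and_true] at heq
      exact ⟨i, j, k, by simp_all, by simp_all, heq.1.symm, heq.2.1.symm, heq.2.2.symm⟩
  · rintro ⟨i, j, k, hij, hjk, rfl, rfl, rfl⟩
    exact ⟨[i, j, k], by simp [sublist_finRange_iff, hij, hjk, hij.trans hjk], rfl⟩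

end ListLemmas

section Words
variable {n m k : ℕ} {l : List ℕ}

/-- Stirling permutations of order `n` as words: each of the letters `1, …, n` occurs exactly twice,
no other letter occurs, and every letter between two occurrences of `a` is larger than `a`. -/
structure IsStirlingWord (n : ℕ) (l : List ℕ) : Prop where
  count_eq : ∀ a, l.count a = if a ∈ Icc 1 n then 2 else 0
  lt_of_sublist : ∀ a b, [a, b, a].Sublist l → a < b

theorem IsStirlingWord.mem_iff (hl : IsStirlingWord n l) {a : ℕ} : a ∈ l ↔ a ∈ Icc 1 n := by
  rw [← List.count_pos_iff, hl.count_eq]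
  split_ifs with h <;> simp [h]

theorem IsStirlingWord.length_eq (hl : IsStirlingWord n l) : l.length = 2 * n := by
  have hletters : l.toFinset = Icc 1 n := by
    ext a
    rw [List.mem_toFinset, hl.mem_iff]
  rw [← List.sum_toFinset_count_eq_length, hletters,
    sum_congr rfl fun a ha => (hl.count_eq a).trans (if_pos ha)]
  simp [mul_comm]

theorem isStirlingWord_zero_iff : IsStirlingWord 0 l ↔ l = [] := by
  refine ⟨fun h => List.eq_nil_of_length_eq_zero h.length_eq, ?_⟩
  rintro rfl
  exact ⟨by simp, by simp⟩

theorem sublist_insertPair (m k : ℕ) (l : List ℕ) : l.Sublist (insertPair m k l) := by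
  conv_lhs => rw [← List.take_append_drop k l]
  exact (List.Sublist.refl _).append (((List.Sublist.refl _).cons m).cons m)

theorem count_insertPair (m k a : ℕ) (l : List ℕ) :
    (insertPair m k l).count a = l.count a + if a = m then 2 else 0 := by
  conv_rhs => rw [← List.take_append_drop k l]
  simp only [insertPair, List.count_append, List.count_cons, beq_iff_eq]
  grind

theorem filter_insertPair (hm : m ∉ l) (k : ℕ) : (insertPair m k l).filter (· ≠ m) = l := by
  rw [insertPair, List.filter_append, List.filter_cons_of_neg (by simp),
    List.filter_cons_of_neg (by simp), ← List.filter_append, List.take_append_drop,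
    List.filter_eq_self]
  intro a ha
  simpa using ne_of_mem_of_not_mem ha hm

theorem idxOf_insertPair (hm : m ∉ l) (hk : k ≤ l.length) : (insertPair m k l).idxOf m = k := by
  rw [insertPair, List.idxOf_append_of_notMem fun h => hm (List.mem_of_mem_take h)]
  simpa using hk

theorem injOn_insertPair (m : ℕ) : Set.InjOn (fun x : List ℕ × ℕ => insertPair m x.2 x.1)
    {x | m ∉ x.1 ∧ x.2 ≤ x.1.length} := by
  rintro ⟨l, k⟩ ⟨hl, hk⟩ ⟨l', k'⟩ ⟨hl', hk'⟩ h
  dsimp only at hl hk hl' hk' h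
  refine Prod.ext ?_ ?_
  · rw [← filter_insertPair hl k, ← filter_insertPair hl' k', h]
  · rw [← idxOf_insertPair hl hk, ← idxOf_insertPair hl' hk', h]

theorem not_sublist_insertPair (hm : m ∉ l) (k b : ℕ) :
    ¬ [m, b, m].Sublist (insertPair m k l) := by
  intro h
  obtain ⟨l₁, l₂, heq, h₁, h₂⟩ := List.sublist_append_iff.1 h
  cases l₁ with
  | nil =>
    obtain rfl : [m, b, m] = l₂ := heq
    have h₃ : [m].Sublist (l.drop k) := (List.cons_sublist_cons.1 h₂).tail
    exact hm (List.mem_of_mem_drop (List.singleton_sublist.1 h₃))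
  | cons a l₁ =>
    obtain rfl : m = a := (List.cons.inj heq).1
    exact hm (List.mem_of_mem_take (h₁.subset List.mem_cons_self))

theorem isStirlingWord_insertPair_iff :
    IsStirlingWord (n + 1) (insertPair (n + 1) k l) ↔ IsStirlingWord n l := by
  have hcount : (∀ a, (insertPair (n + 1) k l).count a = if a ∈ Icc 1 (n + 1) then 2 else 0) ↔
      ∀ a, l.count a = if a ∈ Icc 1 n then 2 else 0 := by
    refine forall_congr' fun a => ?_
    rw [count_insertPair]
    grind
  refine ⟨fun h => ⟨hcount.1 h.count_eq, fun a b hab => ?_⟩,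
    fun h => ⟨hcount.2 h.count_eq, fun a b hab => ?_⟩⟩
  · exact h.lt_of_sublist a b (hab.trans (sublist_insertPair _ _ _))
  · have htop : n + 1 ∉ l := by simp [h.mem_iff]
    have hle : ∀ c ∈ insertPair (n + 1) k l, c ≤ n + 1 := fun c hc => by
      rw [← List.count_pos_iff, hcount.2 h.count_eq] at hc
      grind
    have ha : a ≠ n + 1 := by
      rintro rfl
      exact not_sublist_insertPair htop k b hab
    rcases eq_or_ne b (n + 1) with rfl | hb
    · exact (hle a (hab.subset (by simp))).lt_of_ne ha
    · have hab' := hab.filter (· ≠ n + 1)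
      rw [filter_insertPair htop, List.filter_eq_self.2 (by simp [ha, hb])] at hab'
      exact h.lt_of_sublist a b hab'

theorem IsStirlingWord.exists_eq_insertPair (h : IsStirlingWord (n + 1) l) :
    ∃ l' k, k ≤ l'.length ∧ insertPair (n + 1) k l' = l := by
  have hmem : n + 1 ∈ l := h.mem_iff.2 (by simp)
  obtain ⟨l₁, l₂, rfl, hl₁⟩ := List.eq_append_cons_of_mem hmem
  have hmem₂ : n + 1 ∈ l₂ := by
    have := h.count_eq (n + 1)
    rw [List.count_append, List.count_cons_self, List.count_eq_zero_of_not_mem hl₁] at this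
    rw [← List.count_pos_iff]
    grind
  match l₂, hmem₂ with
  | b :: l₂, hmem₂ =>
    rcases List.mem_cons.1 hmem₂ with rfl | hmem₃
    · exact ⟨l₁ ++ l₂, l₁.length, by simp, by simp [insertPair]⟩
    · have hb : b ≤ n + 1 := (mem_Icc.1 (h.mem_iff.1 (by simp))).2
      have hsub : [n + 1, b, n + 1].Sublist ((n + 1) :: b :: l₂) := by simpa using hmem₃
      have hlt := h.lt_of_sublist (n + 1) b (hsub.trans (List.sublist_append_right _ _))
      omega

/-- The one-line notation of `σ` as a list. -/
def toWord (σ : Fin (2 * n) → Fin (n + 1)) : List ℕ :=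
  List.ofFn fun i => (σ i : ℕ)

theorem toWord_injective (n : ℕ) : Function.Injective (toWord (n := n)) := fun _ _ h =>
  funext fun i => Fin.ext (congrFun (List.ofFn_injective h) i)

theorem isStirlingWord_toWord_iff {σ : Fin (2 * n) → Fin (n + 1)} :
    IsStirlingWord n (toWord σ) ↔ σ ∈ StirlingSet n := by
  refine ⟨fun h => mem_filter.2 ⟨mem_univ σ, fun v hv => ?_, fun i j k hij hjk hik => ?_⟩,
    fun h => ⟨fun a => ?_, fun a b hab => ?_⟩⟩
  · have := h.count_eq v
    rw [toWord, count_ofFn, if_pos (mem_Icc.2 ⟨by omega, by omega⟩)] at this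
    simpa [Fin.val_inj] using this
  · exact h.lt_of_sublist _ _
      (triple_sublist_ofFn_iff.2 ⟨i, j, k, hij, hjk, rfl, rfl, congrArg Fin.val hik.symm⟩)
  · rw [toWord, count_ofFn]
    split_ifs with ha
    · rw [mem_Icc] at ha
      have := (mem_filter.1 h).2.1 ⟨a, by omega⟩ (Nat.one_le_iff_ne_zero.1 ha.1)
      simpa [Fin.ext_iff] using this
    · rw [card_eq_zero, filter_eq_empty_iff]
      rintro i - rfl
      exact ha (mem_Icc.2 ⟨Fin.pos_iff_ne_zero.2 (ne_zero_of_mem_StirlingSet h i), by omega⟩)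
  · obtain ⟨i, j, k, hij, hjk, rfl, rfl, hki⟩ := triple_sublist_ofFn_iff.1 hab
    exact (mem_filter.1 h).2.2 i j k hij hjk (Fin.ext hki.symm)

theorem IsStirlingWord.exists_toWord_eq (h : IsStirlingWord n l) :
    ∃ σ ∈ StirlingSet n, toWord σ = l := by
  have hlen := h.length_eq
  have hle : ∀ a ∈ l, a < n + 1 := fun a ha =>
    Nat.lt_succ_of_le (mem_Icc.1 (h.mem_iff.1 ha)).2
  let σ : Fin (2 * n) → Fin (n + 1) := fun i => ⟨l[i], hle _ (List.getElem_mem _)⟩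
  have hσ : toWord σ = l := List.ext_getElem (by simp [toWord, hlen]) fun i _ _ => by
    simp [toWord, σ]
  exact ⟨σ, isStirlingWord_toWord_iff.1 (hσ ▸ h), hσ⟩

/-- The set `Q_n` in one-line notation. -/
def stirlingWords (n : ℕ) : Finset (List ℕ) :=
  (StirlingSet n).image toWord

theorem mem_stirlingWords : l ∈ stirlingWords n ↔ IsStirlingWord n l := by
  rw [stirlingWords, mem_image]
  refine ⟨?_, IsStirlingWord.exists_toWord_eq⟩
  rintro ⟨σ, hσ, rfl⟩
  exact isStirlingWord_toWord_iff.2 hσ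

theorem stirlingWords_zero : stirlingWords 0 = {[]} := by
  ext l
  rw [mem_stirlingWords, isStirlingWord_zero_iff, mem_singleton]

theorem sum_stirlingWords_succ {M : Type*} [AddCommMonoid M] (n : ℕ) (f : List ℕ → M) :
    ∑ l ∈ stirlingWords (n + 1), f l =
      ∑ l ∈ stirlingWords n, ∑ k ∈ range (2 * n + 1), f (insertPair (n + 1) k l) := by
  have himage : stirlingWords (n + 1) =
      (stirlingWords n ×ˢ range (2 * n + 1)).image fun x => insertPair (n + 1) x.2 x.1 := by
    ext l
    simp only [mem_stirlingWords, mem_image, mem_product, Prod.exists]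
    constructor
    · intro h
      obtain ⟨l, k, hk, rfl⟩ := h.exists_eq_insertPair
      have hl := isStirlingWord_insertPair_iff.1 h
      exact ⟨l, k, ⟨hl, mem_range.2 (by grind [hl.length_eq])⟩, rfl⟩
    · rintro ⟨l, k, ⟨hl, -⟩, rfl⟩
      exact isStirlingWord_insertPair_iff.2 hl
  rw [himage, sum_image ((injOn_insertPair (n + 1)).mono ?_), sum_product]
  rintro ⟨l, k⟩ hlk
  obtain ⟨hl, hk⟩ := mem_product.1 (mem_coe.1 hlk)
  rw [mem_stirlingWords] at hl
  exact ⟨by simp [hl.mem_iff], by grind [hl.length_eq]⟩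

end Words

section Sum
variable {n : ℕ} {σ : Fin (2 * n) → Fin (n + 1)} {A : Type*}

theorem toWord_eq_map_range (σ : Fin (2 * n) → Fin (n + 1)) :
    toWord σ = (List.range (2 * n)).map fun i => sval σ (i + 1) := by
  refine List.ext_getElem (by simp [toWord]) fun i h _ => ?_
  have hi : i < 2 * n := by simpa [toWord] using h
  simpa [toWord] using (sval_fin_succ σ ⟨i, hi⟩).symm

theorem zero_cons_toWord_append (σ : Fin (2 * n) → Fin (n + 1)) :
    0 :: (toWord σ ++ [0]) = (List.range (2 * n + 2)).map (sval σ) := by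
  rw [List.range_succ_eq_map, List.range_succ, toWord_eq_map_range]
  simp [Function.comp_def, sval_zero, sval_two_mul_add_one]

theorem isLocallyStirling_toWord (hσ : σ ∈ StirlingSet n) : IsLocallyStirling 0 (toWord σ) := by
  intro a b c habc
  rw [zero_cons_toWord_append] at habc
  obtain ⟨i, hi, h⟩ := List.infix_iff_getElem?.1 habc
  have hi' : i + 2 < 2 * n + 2 := by grind
  have ha : sval σ i = a := by simpa [show i < 2 * n + 2 by omega] using h 0 (by simp)
  have hb : sval σ (i + 1) = b := by
    simpa [show i + 1 < 2 * n + 2 by omega, add_comm 1] using h 1 (by simp)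
  have hc : sval σ (i + 2) = c := by simpa [hi', add_comm 2] using h 2 (by simp)
  have hmem : i + 1 ∈ Icc 1 (2 * n) := mem_Icc.2 ⟨Nat.le_add_left 1 i, by omega⟩
  rw [← ha, ← hb, ← hc]
  exact ⟨sval_pos hσ hmem, sval_le_sval_succ_of_ascent hσ hmem,
    sval_ne_sval_succ_of_plateau hσ hmem⟩

theorem wordWeight_map_range [CommSemiring A] (u v z w : A) (s : ℕ → ℕ) {N : ℕ}
    (hN : s (N + 1) = 0) :
    wordWeight u v z w (s 0) ((List.range N).map fun i => s (i + 1)) =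
      (∏ i ∈ range N, letterWeight u v z w (s i) (s (i + 1)) (s (i + 2))) * w := by
  induction N generalizing s with
  | zero => simp [wordWeight]
  | succ N ih =>
    have hnext : ((List.range N).map fun i => s (i + 2)).headD 0 = s 2 := by
      cases N <;> simp [List.range_succ_eq_map, hN]
    have htail := ih (fun i => s (i + 1)) hN
    rw [List.range_succ_eq_map, List.map_cons, List.map_map, wordWeight, prod_range_succ']
    simp only [Function.comp_def, Nat.succ_eq_add_one]
    rw [hnext, htail]
    ring

theorem wordWeight_toWord [CommSemiring A] (u v z w : A) (hσ : σ ∈ StirlingSet n) :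
    wordWeight u v z w 0 (toWord σ) =
      u ^ lapQ σ * v ^ dascQ σ * z ^ dpQ σ * w ^ (desQ σ + 1) := by
  have h := wordWeight_map_range u v z w (sval σ) (sval_two_mul_add_one σ)
  have hIcc : ∏ i ∈ range (2 * n),
      letterWeight u v z w (sval σ i) (sval σ (i + 1)) (sval σ (i + 2)) =
      ∏ i ∈ Icc 1 (2 * n),
        letterWeight u v z w (sval σ (i - 1)) (sval σ i) (sval σ (i + 1)) := by
    rw [← Ico_add_one_right_eq_Icc, range_eq_Ico]
    exact prod_Ico_add' (fun i => letterWeight u v z w (sval σ (i - 1)) (sval σ i)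
      (sval σ (i + 1))) 0 (2 * n) 1
  rw [sval_zero, ← toWord_eq_map_range, hIcc] at h
  rw [h, lapQ_eq_card, dascQ_eq_card, dpQ_eq_card hσ, desQ, pow_succ, ← mul_assoc]
  simp only [letterWeight, prod_mul_distrib, ← prod_filter, prod_const]

variable {R : Type*} [CommRing A]

theorem sum_wordWeight_stirlingWords [CommSemiring R] [Algebra R A] {G : Derivation R A A}
    {u v z w : A} (hu : G u = u * w * (v + z)) (hv : G v = u * w)
    (hz : G z = u * w) (hw : G w = u * w) (n : ℕ) :
    ∑ l ∈ stirlingWords n, wordWeight u v z w 0 l = G^[n] w := by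
  induction n with
  | zero => simp [stirlingWords_zero, wordWeight]
  | succ n ih =>
    rw [sum_stirlingWords_succ, Function.iterate_succ_apply', ← ih, map_sum]
    refine sum_congr rfl fun l hl => ?_
    have hword := mem_stirlingWords.1 hl
    obtain ⟨σ, hσ, rfl⟩ := hword.exists_toWord_eq
    have hhead : (toWord σ).head? ≠ some 0 := fun h =>
      absurd (hword.mem_iff.1 (List.mem_of_head? h)) (by simp)
    rw [← hword.length_eq, sum_wordWeight_insertPair hu hv hz hw (isLocallyStirling_toWord hσ)
      n.succ_pos fun b hb => Nat.lt_succ_of_le (mem_Icc.1 (hword.mem_iff.1 hb)).2, if_neg hhead,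
      add_zero]

theorem sum_weight_StirlingSet [CommSemiring R] [Algebra R A] {G : Derivation R A A}
    {u v z w : A} (hu : G u = u * w * (v + z)) (hv : G v = u * w)
    (hz : G z = u * w) (hw : G w = u * w) (n : ℕ) :
    ∑ σ ∈ StirlingSet n, u ^ lapQ σ * v ^ dascQ σ * z ^ dpQ σ * w ^ (desQ σ + 1) = G^[n] w := by
  rw [← sum_wordWeight_stirlingWords hu hv hz hw, stirlingWords,
    sum_image (toWord_injective n).injOn]
  exact sum_congr rfl fun σ hσ => (wordWeight_toWord u v z w hσ).symm

variable [CommRing R] [Algebra R A] {D : Derivation R A A} {u v w : A}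

theorem sum_weight_filter_dpQ_eq_zero (hu : D u = u * v * w) (hv : D v = 2 * (u * w))
    (hw : D w = u * w) (n : ℕ) :
    ∑ σ ∈ StirlingSet n with dpQ σ = 0, u ^ lapQ σ * v ^ dascQ σ * w ^ (desQ σ + 1) =
      D^[n] w := by
  let G := polynomialExtension D (u * w)
  have hGu : G (Polynomial.C u) = Polynomial.C u * Polynomial.C w *
      (Polynomial.C v - Polynomial.X + Polynomial.X) := by
    rw [polynomialExtension_C, hu, sub_add_cancel]
    simp only [map_mul]
    ring
  have hGz : G Polynomial.X = Polynomial.C u * Polynomial.C w := by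
    rw [polynomialExtension_X, map_mul]
  have hGv : G (Polynomial.C v - Polynomial.X) = Polynomial.C u * Polynomial.C w := by
    rw [map_sub, hGz, polynomialExtension_C, hv]
    simp only [map_mul, map_ofNat]
    ring
  have hGw : G (Polynomial.C w) = Polynomial.C u * Polynomial.C w := by
    rw [polynomialExtension_C, hw, map_mul]
  have hsum := congrArg (Polynomial.eval 0) (sum_weight_StirlingSet hGu hGv hGz hGw n)
  rw [iterate_polynomialExtension_C, Polynomial.eval_C, Polynomial.eval_finsetSum] at hsum
  rw [← hsum, sum_filter]
  refine sum_congr rfl fun σ _ => ?_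
  split_ifs with h <;> simp [h]

theorem statement_16_general (hu : D u = u * v * w) (hv : D v = 2 * (u * w))
    (hw : D w = u * w) (n : ℕ) (hn : 1 ≤ n) :
    (D.toLinearMap ^ n) w =
      ∑ i ∈ Icc 1 n, ∑ j ∈ range n,
        (gammaNum n i j : A) * u ^ i * v ^ j * w ^ (2 * n + 1 - 2 * i - j) := by
  have hmaps : ∀ σ ∈ {σ ∈ StirlingSet n | dpQ σ = 0}, (lapQ σ, dascQ σ) ∈ Icc 1 n ×ˢ range n := by
    intro σ hσ
    have hσ' := mem_of_mem_filter σ hσ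
    have := lapQ_pos hσ' hn
    have := lapQ_add_dascQ_le hσ'
    rw [mem_product, mem_Icc, mem_range]
    omega
  rw [Module.End.pow_apply]
  change D^[n] w = _
  rw [← sum_weight_filter_dpQ_eq_zero hu hv hw, ← sum_fiberwise_of_maps_to hmaps, sum_product]
  refine sum_congr rfl fun i _ => sum_congr rfl fun j _ => ?_
  rw [gammaNum, mul_assoc, mul_assoc, ← mul_assoc (u ^ i), ← nsmul_eq_mul]
  have hfiber : {σ ∈ {σ ∈ StirlingSet n | dpQ σ = 0} | (lapQ σ, dascQ σ) = (i, j)} =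
      {σ ∈ StirlingSet n | lapQ σ = i ∧ dascQ σ = j ∧ dpQ σ = 0} := by
    grind
  rw [hfiber]
  refine sum_eq_card_nsmul fun σ hσ => ?_
  rw [mem_filter] at hσ
  obtain ⟨hσ, rfl, rfl, hdp⟩ := hσ
  have hdegree := two_mul_lapQ_add_dascQ_add_dpQ_add_desQ hσ
  rw [show desQ σ + 1 = 2 * n + 1 - 2 * lapQ σ - dascQ σ by omega]

end Sum

theorem statement_16
    (D : Derivation ℚ (MvPolynomial (Fin 3) ℚ) (MvPolynomial (Fin 3) ℚ))
    (hu : D (X 0) = X 0 * X 1 * X 2)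
    (hv : D (X 1) = 2 * (X 0 * X 2))
    (hw : D (X 2) = X 0 * X 2) (n : ℕ) (hn : 1 ≤ n) :
    (D.toLinearMap ^ n) (X 2) =
      ∑ i ∈ Finset.Icc 1 n, ∑ j ∈ Finset.range n,
        (gammaNum n i j : MvPolynomial (Fin 3) ℚ) *
          X 0 ^ i * X 1 ^ j * X 2 ^ (2 * n + 1 - 2 * i - j) :=
  statement_16_general hu hv hw n hn
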